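/- arXiv:1410.5115 — 4 statements merged into one kernel-verified Lean document; each statement's English description precedes it below -/
import Mathlib

section
/- Every polynomial f in the variables x_i^j that is homogeneous of degree n+1 and skew-symmetric under the action of S_{n+1} permuting the superscripts (i.e., σ·f = sgn(σ)·f for all σ ∈ S_{n+1}) is a real linear combination of the polynomials X_{i,jk}, 1 ≤ i, j, k ≤ n. -/
/-- The `(n+1) × (n+1)` matrix whose `j`-th column is `(x_1^j, …, x_n^j, 1)`,
with entries in the polynomial ring in the variables `x_i^j`
(a variable is a pair `(i, j) : Fin n × Fin (n+1)`, `i` the coordinate index, `j` the vertex index). -/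
noncomputable def Vmat (n : ℕ) : Matrix (Fin (n+1)) (Fin (n+1)) (MvPolynomial (Fin n × Fin (n+1)) ℝ) :=
  Matrix.of fun r c => if h : (r : ℕ) < n then MvPolynomial.X (⟨r, h⟩, c) else 1

/-- The basic determinant `V`. -/
noncomputable def Vpoly (n : ℕ) : MvPolynomial (Fin n × Fin (n+1)) ℝ := (Vmat n).det

/-- The matrix of `V` with its `i`-th row replaced by `(x_j^0 x_k^0, …, x_j^n x_k^n)`. -/
noncomputable def Xmat (n : ℕ) (i j k : Fin n) :
    Matrix (Fin (n+1)) (Fin (n+1)) (MvPolynomial (Fin n × Fin (n+1)) ℝ) :=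
  Matrix.of fun r c =>
    if (r : ℕ) = (i : ℕ) then MvPolynomial.X (j, c) * MvPolynomial.X (k, c)
    else if h : (r : ℕ) < n then MvPolynomial.X (⟨r, h⟩, c) else 1

/-- The basic determinant `X_{i,jk}`. -/
noncomputable def Xpoly (n : ℕ) (i j k : Fin n) : MvPolynomial (Fin n × Fin (n+1)) ℝ :=
  (Xmat n i j k).det


/-- The action of `S_{n+1}` on the polynomial ring by permuting the superscripts `j`. -/
noncomputable def permAct (n : ℕ) (σ : Equiv.Perm (Fin (n+1))) :
    MvPolynomial (Fin n × Fin (n+1)) ℝ →+* MvPolynomial (Fin n × Fin (n+1)) ℝ :=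
  (MvPolynomial.rename ((Equiv.refl (Fin n)).prodCongr σ)).toRingHom

/-!
Antisymmetrizing a monomial gives, up to a scalar, the determinant of a matrix whose rows are
monomials evaluated at the vertices, so a skew-symmetric polynomial is a combination of such
alternants. An alternant vanishes unless its row monomials are distinct. Now `n + 1` distinct
monomials in `n` variables of total degree `n + 1` must be `1`, all but one of the variables, and
one quadratic monomial: these are the rows of some `X_{i,jk}`.
-/

open Finsupp MvPolynomial Function

section Alternant

variable {α ι R : Type*} [CommRing R]

/-- The matrix whose entry in row `r` and column `c` is the monomial with exponent vector `p r` in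
the coordinates `x_i^c` of the vertex `c`. Its determinant is the alternant, or generalized
Vandermonde determinant, of the exponent vectors `p`. -/
noncomputable def alternantMatrix (R : Type*) [CommRing R] (p : ι → α →₀ ℕ) :
    Matrix ι ι (MvPolynomial (α × ι) R) :=
  Matrix.of fun r c => rename (·, c) (monomial (p r) 1)

variable [Fintype ι]

lemma exists_eq_sum_mapDomain_prodMk (m : α × ι →₀ ℕ) :
    ∃ p : ι → α →₀ ℕ, m = ∑ r, (p r).mapDomain (·, r) := by
  classical
  refine ⟨fun r => m.comapDomain (·, r) (Prod.mk_left_injective r).injOn, ?_⟩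
  ext ⟨i, r⟩
  rw [finsetSum_apply, Finset.sum_eq_single r]
  · rw [mapDomain_apply (Prod.mk_left_injective r), comapDomain_apply]
  · rintro s - hs
    exact mapDomain_of_notMem_range _ _ (by simp [hs])
  · simp

lemma rename_prodMap_monomial_sum_mapDomain (σ : Equiv.Perm ι) (p : ι → α →₀ ℕ) (a : R) :
    rename (Prod.map id σ) (monomial (∑ r, (p r).mapDomain (·, r)) a) =
      a • ∏ r, alternantMatrix R p r (σ r) := by
  simp only [monomial_sum_index, map_mul, map_prod, rename_C, rename_monomial, alternantMatrix,
    Matrix.of_apply, smul_eq_C_mul, ← mapDomain_comp]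
  rfl

variable [DecidableEq ι]

lemma det_alternantMatrix_comp_perm (τ : Equiv.Perm ι) (p : ι → α →₀ ℕ) :
    (alternantMatrix R (p ∘ τ)).det = Equiv.Perm.sign τ • (alternantMatrix R p).det := by
  rw [show alternantMatrix R (p ∘ τ) = (alternantMatrix R p).submatrix τ id from rfl,
    Matrix.det_permute, Units.smul_def, zsmul_eq_mul]

lemma det_alternantMatrix_eq_zero {p : ι → α →₀ ℕ} (hp : ¬ Injective p) :
    (alternantMatrix R p).det = 0 := by
  obtain ⟨r, s, hrs, hne⟩ := not_injective_iff.1 hp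
  exact Matrix.det_zero_of_row_eq hne (by ext1 c; simp only [alternantMatrix, Matrix.of_apply, hrs])

lemma sum_sign_smul_rename_monomial (p : ι → α →₀ ℕ) (a : R) :
    ∑ σ : Equiv.Perm ι, Equiv.Perm.sign σ •
        rename (Prod.map id σ) (monomial (∑ r, (p r).mapDomain (·, r)) a) =
      a • (alternantMatrix R p).det := by
  rw [← Matrix.det_transpose, Matrix.det_apply, Finset.smul_sum]
  refine Finset.sum_congr rfl fun σ _ => ?_
  rw [rename_prodMap_monomial_sum_mapDomain, smul_comm]
  rfl

lemma sum_sign_smul_rename_mem_span {f : MvPolynomial (α × ι) R} {d : ℕ}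
    (hhom : f.IsHomogeneous d) :
    ∑ σ : Equiv.Perm ι, Equiv.Perm.sign σ • rename (Prod.map id σ) f ∈
      Submodule.span R ((fun p : ι → α →₀ ℕ => (alternantMatrix R p).det) ''
        {p | ∑ r, (p r).degree = d}) := by
  have expand : ∑ σ : Equiv.Perm ι, Equiv.Perm.sign σ • rename (Prod.map id σ) f =
      ∑ m ∈ f.support, ∑ σ : Equiv.Perm ι,
        Equiv.Perm.sign σ • rename (Prod.map id σ) (monomial m (f.coeff m)) := by
    rw [Finset.sum_comm]
    simp only [← Finset.smul_sum, ← map_sum, support_sum_monomial_coeff]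
  rw [expand]
  refine Submodule.sum_mem _ fun m hm => ?_
  have hdeg : m.degree = d := by
    by_contra h
    exact MvPolynomial.mem_support_iff.1 hm (hhom.coeff_eq_zero h)
  obtain ⟨p, hp⟩ := exists_eq_sum_mapDomain_prodMk m
  rw [hp, sum_sign_smul_rename_monomial]
  refine Submodule.smul_mem _ _ (Submodule.subset_span ⟨p, ?_, rfl⟩)
  simpa [hp] using hdeg

theorem mem_span_det_alternantMatrix_of_skew
    (hunit : IsUnit ((Fintype.card ι).factorial : R)) {f : MvPolynomial (α × ι) R} {d : ℕ}
    (hhom : f.IsHomogeneous d)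
    (hskew : ∀ σ : Equiv.Perm ι, rename (Prod.map id σ) f = Equiv.Perm.sign σ • f) :
    f ∈ Submodule.span R ((fun p : ι → α →₀ ℕ => (alternantMatrix R p).det) ''
      {p | ∑ r, (p r).degree = d}) := by
  have antisymmetrization : ∑ σ : Equiv.Perm ι, Equiv.Perm.sign σ • rename (Prod.map id σ) f =
      ((Fintype.card ι).factorial : R) • f := by
    simp only [hskew, smul_smul, Int.units_mul_self, one_smul, Finset.sum_const, Finset.card_univ,
      Fintype.card_perm, Nat.cast_smul_eq_nsmul]
  rw [← Submodule.smul_mem_iff_of_isUnit _ hunit, ← antisymmetrization]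
  exact sum_sign_smul_rename_mem_span hhom

end Alternant

section Exponents

variable {α ι : Type*}

/-- The exponent vectors of the monomials of degree at most one: `none` stands for the monomial `1`
and `some i` for the variable `x_i`. -/
noncomputable def affineExponent (o : Option α) : α →₀ ℕ :=
  o.elim 0 (single · 1)

lemma exists_affineExponent_eq {m : α →₀ ℕ} (hm : m.degree ≤ 1) : ∃ o, affineExponent o = m := by
  rcases Nat.le_one_iff_eq_zero_or_eq_one.1 hm with h | h
  · exact ⟨none, ((degree_eq_zero_iff m).1 h).symm⟩
  · obtain ⟨i, hi⟩ : m ∈ Set.range fun i : α => single i 1 := range_single_one.symm ▸ h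
    exact ⟨some i, hi⟩

lemma exists_single_add_single_eq {m : α →₀ ℕ} (hm : m.degree = 2) :
    ∃ i j, single i 1 + single j 1 = m := by
  obtain ⟨l, hle, hl⟩ := exists_le_degree_eq m 1 (by lia)
  obtain ⟨l', rfl⟩ := le_iff_exists_add.1 hle
  have hl' : l'.degree = 1 := by rw [map_add] at hm; lia
  obtain ⟨i, rfl⟩ : l ∈ Set.range fun i : α => single i 1 := range_single_one.symm ▸ hl
  obtain ⟨j, rfl⟩ : l' ∈ Set.range fun i : α => single i 1 := range_single_one.symm ▸ hl'
  exact ⟨i, j, rfl⟩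

lemma sum_degree_affineExponent [Fintype α] :
    ∑ o : Option α, (affineExponent o).degree = Fintype.card α := by
  simp [Fintype.sum_option, affineExponent]

variable [Fintype ι]

lemma exists_forall_ne_degree_le_one [Nonempty ι] {p : ι → α →₀ ℕ} (hp : Injective p)
    (hdeg : ∑ r, (p r).degree ≤ Fintype.card ι) : ∃ s, ∀ r ≠ s, (p r).degree ≤ 1 := by
  classical
  by_contra! h
  obtain ⟨a, -, ha⟩ := h (Classical.arbitrary ι)
  obtain ⟨b, hba, hb⟩ := h a
  have pointwise (r : ι) : 1 + ((if r = a then 1 else 0) + if r = b then 1 else 0) ≤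
      (p r).degree + if p r = 0 then 1 else 0 := by
    have := degree_eq_zero_iff (p r)
    grind
  have zero_le_once : ∑ r, (if p r = 0 then 1 else 0) ≤ 1 := by
    rw [Finset.sum_boole, Nat.cast_id, Finset.card_le_one]
    intro r hr s hs
    exact hp ((Finset.mem_filter.1 hr).2.trans (Finset.mem_filter.1 hs).2.symm)
  have := Finset.sum_le_sum fun r (_ : r ∈ Finset.univ) => pointwise r
  simp only [Finset.sum_add_distrib, Finset.sum_ite_eq', Finset.mem_univ, if_true,
    Finset.sum_const, Finset.card_univ, smul_eq_mul, mul_one] at this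
  lia

variable [Fintype α]

lemma exists_equiv_forall_ne_eq_affineExponent (hcard : Fintype.card ι = Fintype.card (Option α))
    {p : ι → α →₀ ℕ} (hp : Injective p) {s : ι} (hs : ∀ r ≠ s, (p r).degree ≤ 1) :
    ∃ e : ι ≃ Option α, ∀ r ≠ s, p r = affineExponent (e r) := by
  have (r : ι) : ∃ o, r ≠ s → affineExponent o = p r := by
    by_cases hr : r = s
    · exact ⟨none, fun h => absurd hr h⟩
    · obtain ⟨o, ho⟩ := exists_affineExponent_eq (hs r hr)
      exact ⟨o, fun _ => ho⟩
  choose g hg using this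
  have hinj : Set.InjOn g {s}ᶜ := fun r hr t ht h => hp (by rw [← hg r hr, ← hg t ht, h])
  obtain ⟨e, he⟩ := Set.MapsTo.exists_equiv_extend_of_card_eq (t := Finset.univ) hcard
    (fun _ _ => Finset.mem_coe.2 (Finset.mem_univ _)) hinj
  refine ⟨e.trans (Equiv.subtypeUnivEquiv Finset.mem_univ), fun r hr => ?_⟩
  rw [← hg r hr, ← he r hr]
  rfl

theorem exists_eq_update_affineExponent_comp [DecidableEq α]
    (hcard : Fintype.card ι = Fintype.card α + 1) {p : ι → α →₀ ℕ} (hp : Injective p)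
    (hdeg : ∑ r, (p r).degree = Fintype.card α + 1) :
    ∃ (e : ι ≃ Option α) (i j k : α),
      p = update affineExponent (some i) (single j 1 + single k 1) ∘ e := by
  classical
  have : Nonempty ι := Fintype.card_pos_iff.1 (by lia)
  obtain ⟨s, hs⟩ := exists_forall_ne_degree_le_one hp (hdeg.trans hcard.symm).le
  obtain ⟨e, he⟩ :=
    exists_equiv_forall_ne_eq_affineExponent (hcard.trans Fintype.card_option.symm) hp hs
  have degree_s : (p s).degree = (affineExponent (e s)).degree + 1 := by
    have total : ∑ r, (affineExponent (e r)).degree = Fintype.card α :=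
      (e.sum_comp fun o => (affineExponent o).degree).trans sum_degree_affineExponent
    have others : ∑ r ∈ {s}ᶜ, (p r).degree = ∑ r ∈ {s}ᶜ, (affineExponent (e r)).degree :=
      Finset.sum_congr rfl fun r hr => by rw [he r (by simpa using hr)]
    rw [Fintype.sum_eq_add_sum_compl s] at total hdeg
    lia
  obtain ⟨i, hi⟩ : ∃ i, e s = some i := by
    refine Option.ne_none_iff_exists'.1 fun hnone => ?_
    -- Otherwise `p s` is a variable, hence equal to one of the other rows.
    obtain ⟨o, ho⟩ := exists_affineExponent_eq (m := p s)
      (by simp [degree_s, hnone, affineExponent])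
    have hne : e.symm o ≠ s := by
      rintro rfl
      simp [← ho] at degree_s
    exact hne (hp (by rw [he _ hne, e.apply_symm_apply, ho]))
  obtain ⟨j, k, hjk⟩ := exists_single_add_single_eq (m := p s)
    (by simp [degree_s, hi, affineExponent])
  refine ⟨e, i, j, k, funext fun r => ?_⟩
  obtain rfl | hr := eq_or_ne r s
  · simp [hi, hjk]
  · rw [comp_apply, update_of_ne (hi ▸ e.injective.ne hr), he r hr]

end Exponents

lemma Xmat_eq_alternantMatrix (n : ℕ) (i j k : Fin n) :
    Xmat n i j k = alternantMatrix ℝ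
      (update affineExponent (some i) (single j 1 + single k 1) ∘ finSuccEquivLast) := by
  have monomial_eq_X (l : Fin n) : monomial (single l 1) (1 : ℝ) = X l := rfl
  ext1 r c
  induction r using Fin.lastCases with
  | last => simp [Xmat, alternantMatrix, affineExponent, i.isLt.ne']
  | cast l =>
    obtain rfl | hl := eq_or_ne l i
    · simp [Xmat, alternantMatrix, monomial_single_add, monomial_eq_X]
    · simp [Xmat, alternantMatrix, affineExponent, hl, Fin.val_ne_iff.2 hl, monomial_eq_X]

lemma det_alternantMatrix_mem_span_Xpoly {n : ℕ} {p : Fin (n + 1) → Fin n →₀ ℕ}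
    (hdeg : ∑ r, (p r).degree = n + 1) :
    (alternantMatrix ℝ p).det ∈ Submodule.span ℝ
      (Set.range fun p : Fin n × Fin n × Fin n => Xpoly n p.1 p.2.1 p.2.2) := by
  by_cases hp : Injective p
  · obtain ⟨e, i, j, k, rfl⟩ :=
      exists_eq_update_affineExponent_comp (by simp) hp (hdeg.trans (by simp))
    have hperm : update affineExponent (some i) (single j 1 + single k 1) ∘ e =
        (update affineExponent (some i) (single j 1 + single k 1) ∘ finSuccEquivLast) ∘
          e.trans finSuccEquivLast.symm := by
      ext1 r
      simp
    rw [hperm, det_alternantMatrix_comp_perm, ← Xmat_eq_alternantMatrix, Units.smul_def]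
    exact zsmul_mem (Submodule.subset_span (Set.mem_range_self (i, j, k))) _
  · rw [det_alternantMatrix_eq_zero hp]
    exact Submodule.zero_mem _

/-- Every polynomial in the variables `x_i^j`, homogeneous of degree `n+1` and skew-symmetric
under the permutations of the superscripts, is a real linear combination of the `X_{i,jk}`. -/
theorem skewSymmetric_mem_span_Xpoly (n : ℕ) (hn : 1 ≤ n)
    (f : MvPolynomial (Fin n × Fin (n+1)) ℝ)
    (hhom : f.IsHomogeneous (n + 1))
    (hskew : ∀ σ : Equiv.Perm (Fin (n+1)),
      permAct n σ f = ((Equiv.Perm.sign σ : ℤ) : ℝ) • f) :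
    f ∈ Submodule.span ℝ
      (Set.range fun p : Fin n × Fin n × Fin n => Xpoly n p.1 p.2.1 p.2.2) := by
  have hunit : IsUnit ((Fintype.card (Fin (n + 1))).factorial : ℝ) :=
    (Nat.cast_ne_zero.2 (Nat.factorial_ne_zero _)).isUnit
  have hskew' (σ : Equiv.Perm (Fin (n + 1))) :
      rename (Prod.map id σ) f = Equiv.Perm.sign σ • f := by
    rw [Units.smul_def, ← Int.cast_smul_eq_zsmul ℝ]
    exact hskew σ
  refine Submodule.span_le.2 ?_ (mem_span_det_alternantMatrix_of_skew hunit hhom hskew')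
  rintro _ ⟨p, hdeg, rfl⟩
  exact det_alternantMatrix_mem_span_Xpoly hdeg
end

section
/- Let m be a monomial of total degree n+1 in the variables x_i^j in which every superscript value j ∈ {0,…,n} occurs with total multiplicity exactly 1. Then Skew(m) = 0. -/
/-- Skew-symmetrization over the superscripts: `Skew(f) = Σ_σ sgn(σ) · σ·f`. -/
noncomputable def skew (n : ℕ) (f : MvPolynomial (Fin n × Fin (n+1)) ℝ) :
    MvPolynomial (Fin n × Fin (n+1)) ℝ :=
  ∑ σ : Equiv.Perm (Fin (n+1)), (Equiv.Perm.sign σ : ℤ) • permAct n σ f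

/-! Write the monomial as `∏ j, m_j(x^j)`, where `m_j` collects the variables with superscript `j`.
Then `Skew` is the Leibniz expansion of `det (m_j(x^k))_{k,j}`. If every superscript has
multiplicity one, each `m_j` is a single variable; there are more superscripts than subscripts, so
two columns of this matrix coincide. -/

open MvPolynomial

section

variable {ι κ : Type*}

lemma exists_eq_single_one_of_sum_eq_one [Fintype ι] [DecidableEq ι] {v : ι → ℕ}
    (hv : ∑ i, v i = 1) : ∃ i, v = Pi.single i 1 := by
  obtain ⟨i, hi⟩ := (Finsupp.sum_eq_one_iff (Finsupp.equivFunOnFinite.symm v)).mp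
    ((Finsupp.sum_fintype _ _ fun _ => rfl).trans hv)
  exact ⟨i, by simpa [Finsupp.single_eq_pi_single] using congrArg DFunLike.coe hi⟩

lemma exists_ne_eq_of_sum_eq_one_of_card_lt [Fintype ι] [Fintype κ]
    (hcard : Fintype.card ι < Fintype.card κ) (v : κ → ι → ℕ) (hv : ∀ j, ∑ i, v j i = 1) :
    ∃ j k, j ≠ k ∧ v j = v k := by
  classical
  choose c hc using fun j => exists_eq_single_one_of_sum_eq_one (hv j)
  obtain ⟨j, k, hjk, hcjk⟩ := Fintype.exists_ne_map_eq_of_card_lt c hcard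
  exact ⟨j, k, hjk, by rw [hc j, hc k, hcjk]⟩

lemma monomial_one_eq_prod_rename {R : Type*} [CommSemiring R] [Fintype ι] [Fintype κ]
    (d : ι × κ →₀ ℕ) :
    monomial d (1 : R) = ∏ j, rename (·, j) (∏ i, X i ^ d (i, j)) := by
  simp only [map_prod, map_pow, rename_X]
  rw [monomial_eq, C_1, one_mul, Finsupp.prod_fintype _ _ fun _ => pow_zero _,
    Fintype.prod_prod_type_right]

variable {R : Type*} [CommRing R] [Fintype κ] [DecidableEq κ]

/-- Skew-symmetrization over the second index of the variables `X (i, j)`, generalizing `skew`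
to arbitrary index types and coefficient rings. -/
noncomputable def skewSymmetrization (f : MvPolynomial (ι × κ) R) : MvPolynomial (ι × κ) R :=
  ∑ σ : Equiv.Perm κ, (Equiv.Perm.sign σ : ℤ) • rename (Prod.map id σ) f

lemma skew_eq_skewSymmetrization (n : ℕ) (f : MvPolynomial (Fin n × Fin (n + 1)) ℝ) :
    skew n f = skewSymmetrization f :=
  rfl

lemma skewSymmetrization_prod_rename_eq_det (f : κ → MvPolynomial ι R) :
    skewSymmetrization (∏ j, rename (·, j) (f j)) =
      (Matrix.of fun k j => rename (·, k) (f j)).det := by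
  simp only [skewSymmetrization, map_prod, rename_rename, Matrix.det_apply, Matrix.of_apply,
    Units.smul_def, Function.comp_def, Prod.map_apply, id_eq]

lemma skewSymmetrization_prod_rename_eq_zero (f : κ → MvPolynomial ι R) {j k : κ} (hjk : j ≠ k)
    (hf : f j = f k) : skewSymmetrization (∏ l, rename (·, l) (f l)) = 0 := by
  rw [skewSymmetrization_prod_rename_eq_det]
  exact Matrix.det_zero_of_column_eq hjk fun l => by simp only [Matrix.of_apply, hf]

theorem skew_monomial_eq_zero_of_all_mult_one_general [Fintype ι]
    (hcard : Fintype.card ι < Fintype.card κ) (d : ι × κ →₀ ℕ)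
    (hmult : ∀ j, ∑ i, d (i, j) = 1) : skewSymmetrization (monomial d (1 : R)) = 0 := by
  obtain ⟨j, k, hjk, hd⟩ :=
    exists_ne_eq_of_sum_eq_one_of_card_lt hcard (fun j i => d (i, j)) hmult
  have column_eq : ∏ i, (X i : MvPolynomial ι R) ^ d (i, j) = ∏ i, X i ^ d (i, k) :=
    Finset.prod_congr rfl fun i _ => congrArg (X i ^ ·) (congrFun hd i)
  rw [monomial_one_eq_prod_rename]
  exact skewSymmetrization_prod_rename_eq_zero _ hjk column_eq

end

/-- If in a monomial of total degree `n+1` every superscript value occurs with total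
multiplicity exactly `1`, then its skew-symmetrization vanishes. -/
theorem skew_monomial_eq_zero_of_all_mult_one (n : ℕ) (hn : 1 ≤ n)
    (d : (Fin n × Fin (n+1)) →₀ ℕ) (hdeg : (d.sum fun _ e => e) = n + 1)
    (hmult : ∀ j : Fin (n+1), ∑ i : Fin n, d (i, j) = 1) :
    skew n (MvPolynomial.monomial d (1 : ℝ)) = 0 := by
  rw [skew_eq_skewSymmetrization]
  exact skew_monomial_eq_zero_of_all_mult_one_general (by simp) d hmult
end

section
/- For every r ∈ {1, …, n}, let ξ_r denote the derivation ξ_r := Σ_{m=0}^{n} ∂/∂x_r^m on the polynomial ring in the variables x_i^j. Then for all 1 ≤ i, j, k ≤ n, one has ξ_r(X_{i,jk}) = (δ_{ij}·δ_{rk} + δ_{ik}·δ_{rj})·V, where δ is the Kronecker delta. -/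
/-- The Kronecker delta. -/
def kron {n : ℕ} (a b : Fin n) : ℝ := if a = b then 1 else 0

/-!
The operator `ξ_r` annihilates every row of the matrix of `V` except the `r`-th, which it sends to
the last row `(1, …, 1)`. Expanding `ξ_r` of a determinant row by row, each differentiated row other
than the `i`-th is therefore zero or a repetition of the last row, and only the term in which the
`i`-th row `w` is differentiated survives: `ξ_r` acts on the determinant through `w` alone. For
`w = x_j x_k` the Leibniz rule gives `δ_{rk} x_j + δ_{rj} x_k`.
-/

section Determinant

variable {R A ι : Type*} [CommSemiring R] [DecidableEq ι]

theorem derivation_prod {M : Type*} [CommSemiring A] [Algebra R A] [AddCommMonoid M] [Module A M]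
    [Module R M] (D : Derivation R A M) (s : Finset ι) (f : ι → A) :
    D (∏ a ∈ s, f a) = ∑ b ∈ s, (∏ a ∈ s.erase b, f a) • D (f b) := by
  induction s using Finset.induction_on with
  | empty => simp
  | insert c s hc ih =>
    have prod_erase_insert : ∀ b ∈ s,
        ∏ a ∈ (insert c s).erase b, f a = f c * ∏ a ∈ s.erase b, f a := fun b hb => by
      rw [Finset.erase_insert_of_ne (ne_of_mem_of_not_mem hb hc).symm,
        Finset.prod_insert (mt Finset.mem_of_mem_erase hc)]
    rw [Finset.prod_insert hc, D.leibniz, ih, Finset.sum_insert hc, Finset.erase_insert hc,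
      Finset.smul_sum, add_comm]
    congr 1
    exact Finset.sum_congr rfl fun b hb => by rw [prod_erase_insert b hb, mul_smul]

variable [CommRing A] [Algebra R A] [Fintype ι]

theorem derivation_det (D : Derivation R A A) (M : Matrix ι ι A) :
    D M.det = ∑ b, (M.updateRow b (D ∘ M b)).det := by
  have det_eq_sum_rows (N : Matrix ι ι A) :
      N.det = ∑ σ : Equiv.Perm ι, Equiv.Perm.sign σ • ∏ a, N a (σ a) := by
    rw [← N.det_transpose, Matrix.det_apply]
    rfl
  have prod_updateRow (σ : Equiv.Perm ι) (b : ι) :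
      ∏ a, M.updateRow b (D ∘ M b) a (σ a) =
        (∏ a ∈ Finset.univ.erase b, M a (σ a)) • D (M b (σ b)) := by
    rw [← Finset.prod_erase_mul _ _ (Finset.mem_univ b), Matrix.updateRow_self, smul_eq_mul]
    congr 1
    exact Finset.prod_congr rfl fun a ha => by rw [Matrix.updateRow_ne (Finset.ne_of_mem_erase ha)]
  simp only [det_eq_sum_rows, prod_updateRow]
  rw [map_sum, Finset.sum_comm]
  refine Finset.sum_congr rfl fun σ _ => ?_
  rw [← Finset.smul_sum, ← derivation_prod, Units.smul_def, Units.smul_def, map_zsmul]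

theorem det_updateRow_smul_of_tower (M : Matrix ι ι A) (b : ι) (t : R) (v : ι → A) :
    (M.updateRow b (t • v)).det = t • (M.updateRow b v).det := by
  rw [← algebraMap_smul A t v, Matrix.det_updateRow_smul, Algebra.smul_def]

theorem det_updateRow_eq_zero_of_mem_span {M : Matrix ι ι A} {b : ι} {v : ι → A}
    (hv : v ∈ Submodule.span A (M '' {b}ᶜ)) :
    (M.updateRow b v).det = 0 := by
  suffices Submodule.span A (M '' {b}ᶜ) ≤
      LinearMap.ker (Matrix.detRowAlternating.toMultilinearMap.toLinearMap M b) from this hv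
  rw [Submodule.span_le]
  rintro _ ⟨l, hl, rfl⟩
  exact Matrix.det_updateRow_eq_zero hl

theorem derivation_det_updateRow (D : Derivation R A A) {M : Matrix ι ι A} {i : ι}
    (hD : ∀ b ≠ i, D ∘ M b ∈ Submodule.span A (M '' {i, b}ᶜ)) (w : ι → A) :
    D (M.updateRow i w).det = (M.updateRow i (D ∘ w)).det := by
  rw [derivation_det, Finset.sum_eq_single_of_mem i (Finset.mem_univ i)]
  · rw [Matrix.updateRow_self, Matrix.updateRow_idem]
  · intro b _ hb
    rw [Matrix.updateRow_ne hb]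
    refine det_updateRow_eq_zero_of_mem_span (Submodule.span_mono ?_ (hD b hb))
    rintro _ ⟨l, hl, rfl⟩
    obtain ⟨hli, hlb⟩ : l ≠ i ∧ l ≠ b := by simpa using hl
    exact ⟨l, hlb, Matrix.updateRow_ne hli⟩

end Determinant

section CoordTranslation

variable {R ι κ : Type*} [CommSemiring R] [Fintype κ]

/-- The operator `ξ_r = Σ_m ∂/∂x_r^m`, the infinitesimal translation of the `r`-th coordinate of all
points `x^m`, `m ∈ κ`, simultaneously. -/
noncomputable def coordTranslation (r : ι) :
    Derivation R (MvPolynomial (ι × κ) R) (MvPolynomial (ι × κ) R) :=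
  ∑ m, MvPolynomial.pderiv (r, m)

theorem coordTranslation_apply (r : ι) (p : MvPolynomial (ι × κ) R) :
    coordTranslation r p = ∑ m, MvPolynomial.pderiv (r, m) p := by
  simp [coordTranslation, ← Derivation.coeFnAddMonoidHom_apply]

theorem coordTranslation_X [DecidableEq ι] (r i : ι) (m : κ) :
    coordTranslation r (MvPolynomial.X (i, m) : MvPolynomial (ι × κ) R) =
      if r = i then 1 else 0 := by
  classical
  simp [coordTranslation_apply, MvPolynomial.pderiv_X, Pi.single_apply, ite_and, eq_comm]

end CoordTranslation

section BasicDeterminants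

variable {n : ℕ}

theorem Vmat_castSucc (i : Fin n) : Vmat n i.castSucc = fun c => MvPolynomial.X (i, c) := by
  ext1 c
  simp [Vmat]

theorem Vmat_last : Vmat n (Fin.last n) = 1 := by
  ext1 c
  simp [Vmat]

theorem Xmat_eq_updateRow_Vmat (i j k : Fin n) :
    Xmat n i j k =
      (Vmat n).updateRow i.castSucc (Vmat n j.castSucc * Vmat n k.castSucc) := by
  ext1 b c
  simp [Xmat, Vmat, Matrix.updateRow_apply, Fin.ext_iff]

theorem coordTranslation_comp_Vmat_castSucc (r i : Fin n) :
    coordTranslation r ∘ Vmat n i.castSucc = kron r i • Vmat n (Fin.last n) := by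
  ext1 c
  simp [Vmat_castSucc, Vmat_last, coordTranslation_X, kron]

theorem coordTranslation_comp_Vmat_last (r : Fin n) :
    coordTranslation r ∘ Vmat n (Fin.last n) = 0 := by
  ext1 c
  simp [Vmat_last]

theorem coordTranslation_det_updateRow_Vmat (r i : Fin n)
    (w : Fin (n + 1) → MvPolynomial (Fin n × Fin (n + 1)) ℝ) :
    coordTranslation r ((Vmat n).updateRow i.castSucc w).det =
      ((Vmat n).updateRow i.castSucc (coordTranslation r ∘ w)).det := by
  refine derivation_det_updateRow _ (fun b hb => ?_) w
  cases b using Fin.lastCases with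
  | last => exact coordTranslation_comp_Vmat_last r ▸ zero_mem _
  | cast b =>
    rw [coordTranslation_comp_Vmat_castSucc]
    refine Submodule.smul_of_tower_mem _ _ (Submodule.subset_span ⟨Fin.last n, ?_, rfl⟩)
    simp [(Fin.castSucc_lt_last _).ne']

theorem coordTranslation_comp_Vmat_mul_Vmat (r j k : Fin n) :
    coordTranslation r ∘ (Vmat n j.castSucc * Vmat n k.castSucc) =
      kron r k • Vmat n j.castSucc + kron r j • Vmat n k.castSucc := by
  ext1 c
  have hV (l : Fin n) : coordTranslation r (Vmat n l.castSucc c) = kron r l • 1 := by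
    simpa [Vmat_last] using congrFun (coordTranslation_comp_Vmat_castSucc r l) c
  simp [Derivation.leibniz, hV]

theorem det_updateRow_Vmat_castSucc (i l : Fin n) :
    ((Vmat n).updateRow i.castSucc (Vmat n l.castSucc)).det = kron i l • Vpoly n := by
  obtain rfl | hil := eq_or_ne i l
  · simp [kron, Vpoly]
  · have castSucc_ne : l.castSucc ≠ i.castSucc := (Fin.castSucc_injective n).ne hil.symm
    rw [Matrix.det_updateRow_eq_zero castSucc_ne, kron, if_neg hil, zero_smul]

end BasicDeterminants

/-- The infinitesimal translation `ξ_r = Σ_m ∂/∂x_r^m` sends `X_{i,jk}` to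
`(δ_{ij} δ_{rk} + δ_{ik} δ_{rj}) · V`. -/
theorem xi_Xpoly (n : ℕ) (hn : 1 ≤ n) (r i j k : Fin n) :
    ∑ m : Fin (n+1), MvPolynomial.pderiv (r, m) (Xpoly n i j k) =
      (kron i j * kron r k + kron i k * kron r j) • Vpoly n := by
  calc
    _ = coordTranslation r ((Vmat n).updateRow i.castSucc
          (Vmat n j.castSucc * Vmat n k.castSucc)).det := by
      rw [← Xmat_eq_updateRow_Vmat, coordTranslation_apply, Xpoly]
    _ = ((Vmat n).updateRow i.castSucc
          (kron r k • Vmat n j.castSucc + kron r j • Vmat n k.castSucc)).det := by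
      rw [coordTranslation_det_updateRow_Vmat, coordTranslation_comp_Vmat_mul_Vmat]
    _ = kron r k • kron i j • Vpoly n + kron r j • kron i k • Vpoly n := by
      simp only [Matrix.det_updateRow_add, det_updateRow_smul_of_tower,
        det_updateRow_Vmat_castSucc]
    _ = (kron i j * kron r k + kron i k * kron r j) • Vpoly n := by
      module
end

section
/- Let W_0, …, W_n ∈ ℝⁿ be affinely independent and let CC denote the circumcenter of the simplex with these vertices (the unique point equidistant from all of them). Then for every ℓ ∈ {1, …, n}, the ℓ-th coordinate of CC times V(W_0, …, W_n) equals (1/2)·Σ_{i=1}^{n} X_{ℓ,ii}(W_0, …, W_n). In particular, the map sending a nondegenerate simplex to (signed volume)·(circumcenter) is given by polynomials in the coordinates of the vertices. -/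
/-!
Expanding the equations `∑ i, (c_i - x_i^m)² = ρ` of the circumsphere gives
`∑ i, (x_i^m)² = ∑ i, 2 c_i x_i^m + (ρ - ∑ i, c_i²) · 1` for every vertex `m`. So the row of squared
norms of the vertices is the linear combination of the rows of the matrix of `V` in which the
`ℓ`-th row has coefficient `2 c_ℓ`. Putting it in place of that `ℓ`-th row multiplies the
determinant by `2 c_ℓ`, whereas linearity in the `ℓ`-th row makes the new determinant
`∑ i, X_{ℓ,ii}`.
-/

theorem det_updateRow_finset_sum {ι κ R : Type*} [Fintype ι] [DecidableEq ι] [CommRing R]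
    (A : Matrix ι ι R) (r : ι) (s : Finset κ) (v : κ → ι → R) :
    (A.updateRow r (∑ i ∈ s, v i)).det = ∑ i ∈ s, (A.updateRow r (v i)).det :=
  Matrix.detRowAlternating.map_update_sum s r v A

theorem sum_sub_sq_eq_of_dist_eq {ι : Type*} [Fintype ι] {x y : EuclideanSpace ℝ ι} {r : ℝ}
    (h : dist x y = r) : ∑ i, (x i - y i) ^ 2 = r ^ 2 := by
  simp [← h, EuclideanSpace.dist_sq_eq, Real.dist_eq]

section HomogeneousMatrix

variable {ι R S : Type*} {n : ℕ}

/-- The matrix whose columns are the homogeneous coordinates `(P_1, …, P_n, 1)` of a family of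
points `P` of the affine space `Rⁿ`. For `n + 1` points its determinant is the value of `V`. -/
def homogeneousMatrix [One R] (P : ι → Fin n → R) : Matrix (Fin (n + 1)) ι R :=
  Matrix.of (Fin.snoc (fun i m => P m i) 1 : Fin (n + 1) → ι → R)

@[simp]
theorem homogeneousMatrix_castSucc_apply [One R] (P : ι → Fin n → R) (i : Fin n) (m : ι) :
    homogeneousMatrix P i.castSucc m = P m i := by
  simp [homogeneousMatrix]

@[simp]
theorem homogeneousMatrix_last_apply [One R] (P : ι → Fin n → R) (m : ι) :
    homogeneousMatrix P (Fin.last n) m = 1 := by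
  simp [homogeneousMatrix]

theorem homogeneousMatrix_map {F : Type*} [One R] [One S] [FunLike F R S] [OneHomClass F R S]
    (f : F) (P : ι → Fin n → R) :
    (homogeneousMatrix P).map f = homogeneousMatrix fun m i => f (P m i) := by
  ext r m
  cases r using Fin.lastCases <;> simp

variable [CommRing R] {c : Fin n → R} {ρ : R}

theorem sum_mul_self_eq_sum_smul_homogeneousMatrix {P : ι → Fin n → R}
    (hP : ∀ m, ∑ i, (c i - P m i) ^ 2 = ρ) :
    (∑ i, fun m => P m i * P m i) =
      ∑ r, (Fin.snoc (fun i => 2 * c i) (ρ - ∑ i, c i ^ 2) : Fin (n + 1) → R) r •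
        homogeneousMatrix P r := by
  ext m
  have expand : ∑ i, P m i * P m i = ∑ i, 2 * c i * P m i + (ρ - ∑ i, c i ^ 2) := by
    rw [← hP m, ← Finset.sum_sub_distrib, ← Finset.sum_add_distrib]
    exact Finset.sum_congr rfl fun i _ => by ring
  simpa [Fin.sum_univ_castSucc] using expand

theorem two_mul_mul_det_homogeneousMatrix {P : Fin (n + 1) → Fin n → R}
    (hP : ∀ m, ∑ i, (c i - P m i) ^ 2 = ρ) (ℓ : Fin n) :
    2 * c ℓ * (homogeneousMatrix P).det =
      ∑ i, ((homogeneousMatrix P).updateRow ℓ.castSucc fun m => P m i * P m i).det := by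
  rw [← det_updateRow_finset_sum, sum_mul_self_eq_sum_smul_homogeneousMatrix hP,
    Matrix.det_updateRow_sum, Fin.snoc_castSucc, smul_eq_mul]

end HomogeneousMatrix

section Evaluation

open MvPolynomial

theorem Vmat_eq_homogeneousMatrix (n : ℕ) :
    Vmat n = homogeneousMatrix fun m i => X (i, m) := by
  ext1 r m
  cases r using Fin.lastCases <;> simp [Vmat]

theorem Xmat_eq_updateRow {n : ℕ} (i j k : Fin n) :
    Xmat n i j k = (Vmat n).updateRow i.castSucc fun m => X (j, m) * X (k, m) := by
  ext1 r m
  simp [Xmat, Vmat, Matrix.updateRow_apply, Fin.ext_iff]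

variable {n : ℕ} {R : Type*} [CommRing R] [Algebra ℝ R] (P : Fin (n + 1) → Fin n → R)

theorem aeval_Vpoly :
    aeval (fun v => P v.2 v.1) (Vpoly n) = (homogeneousMatrix P).det := by
  simp [Vpoly, Vmat_eq_homogeneousMatrix, AlgHom.map_det, homogeneousMatrix_map]

theorem aeval_Xpoly (i j k : Fin n) :
    aeval (fun v => P v.2 v.1) (Xpoly n i j k) =
      ((homogeneousMatrix P).updateRow i.castSucc fun m => P m j * P m k).det := by
  simp [Xpoly, Xmat_eq_updateRow, Vmat_eq_homogeneousMatrix, AlgHom.map_det, Matrix.map_updateRow,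
    homogeneousMatrix_map, Function.comp_def]

end Evaluation

theorem circumcenter_poly_identity_general {n : ℕ} {R : Type*} [CommRing R] [Algebra ℝ R]
    {P : Fin (n + 1) → Fin n → R} {c : Fin n → R} {ρ : R}
    (hP : ∀ m, ∑ i, (c i - P m i) ^ 2 = ρ) (ℓ : Fin n) :
    c ℓ * MvPolynomial.aeval (fun v => P v.2 v.1) (Vpoly n) =
      (1 / 2 : ℝ) • ∑ i, MvPolynomial.aeval (fun v => P v.2 v.1) (Xpoly n ℓ i i) := by
  simp only [aeval_Vpoly, aeval_Xpoly]
  rw [← two_mul_mul_det_homogeneousMatrix hP, one_div, eq_inv_smul_iff₀ two_ne_zero, two_smul]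
  ring

/-- For an affinely independent tuple `W_0, …, W_n` with circumcenter `cc` (the unique point
equidistant from all the `W_m`), the `ℓ`-th coordinate of `cc` times `V(W_0, …, W_n)` equals
`(1/2) Σ_i X_{ℓ,ii}(W_0, …, W_n)`; in particular `V · cc` is polynomial in the vertices. -/
theorem circumcenter_poly_identity (n : ℕ) (hn : 1 ≤ n)
    (W : Fin (n+1) → EuclideanSpace ℝ (Fin n)) (hW : AffineIndependent ℝ W)
    (cc : EuclideanSpace ℝ (Fin n)) (hcc : ∀ m : Fin (n+1), dist cc (W m) = dist cc (W 0))
    (ℓ : Fin n) :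
    cc ℓ * MvPolynomial.eval (fun v => W v.2 v.1) (Vpoly n) =
      (1 / 2) * ∑ i : Fin n, MvPolynomial.eval (fun v => W v.2 v.1) (Xpoly n ℓ i i) := by
  exact circumcenter_poly_identity_general (P := fun m i => W m i)
    (fun m => sum_sub_sq_eq_of_dist_eq (hcc m)) ℓ
end
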